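/- Let g ∈ L¹(ℝⁿ), g not a.e. zero, and 1 < s < ∞. Then W(x) = (Mg(x))^{1/s} belongs to RH_q for every 1 < q < s, where M is the Hardy–Littlewood maximal function. -/

import Mathlib

open MeasureTheory Metric ENNReal

/-- The uncentered Hardy–Littlewood maximal function, with values in `ℝ≥0∞`:
`Mg(x) = sup over balls B containing x of ⨍_B |g|`. -/
noncomputable def maximalFn {X : Type*} [MetricSpace X] [MeasurableSpace X]
    (μ : Measure X) (g : X → ℝ) (x : X) : ℝ≥0∞ :=
  ⨆ (c : X) (r : ℝ) (_ : x ∈ ball c r),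
    (μ (ball c r))⁻¹ * ∫⁻ y in ball c r, ‖g y‖₊ ∂μ


section Helpers

open Set Module

/-- measurability of the maximal function -/
lemma maximalFn_measurable {n : ℕ} (g : EuclideanSpace ℝ (Fin n) → ℝ) :
    Measurable (maximalFn volume g) := by
  apply measurable_of_Ioi
  intro a
  apply IsOpen.measurableSet
  rw [isOpen_iff_mem_nhds]
  intro x hx
  simp only [mem_preimage, mem_Ioi, maximalFn, lt_iSup_iff] at hx
  obtain ⟨c, r, hxc, h⟩ := hx
  filter_upwards [isOpen_ball.mem_nhds hxc] with y hy
  simp only [mem_preimage, mem_Ioi, maximalFn, lt_iSup_iff]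
  exact ⟨c, r, hy, h⟩

lemma le_maximalFn {n : ℕ} (g : EuclideanSpace ℝ (Fin n) → ℝ)
    {c x : EuclideanSpace ℝ (Fin n)} {r : ℝ} (hx : x ∈ ball c r) :
    (volume (ball c r))⁻¹ * ∫⁻ y in ball c r, ‖g y‖₊ ≤ maximalFn volume g x :=
  le_iSup_of_le c (le_iSup_of_le r (le_iSup_of_le hx le_rfl))

lemma setLIntegral_le_maximalFn {n : ℕ} (g : EuclideanSpace ℝ (Fin n) → ℝ)
    {c x : EuclideanSpace ℝ (Fin n)} {r : ℝ} (hx : x ∈ ball c r) :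
    ∫⁻ y in ball c r, ‖g y‖₊ ≤ volume (ball c r) * maximalFn volume g x := by
  have hr : 0 < r := pos_of_mem_ball hx
  have h := le_maximalFn g hx
  rwa [mul_comm, ← div_eq_mul_inv, ENNReal.div_le_iff' (measure_ball_pos _ _ hr).ne'
    measure_ball_lt_top.ne] at h

lemma vol_ball_scale {n : ℕ} (c c' : EuclideanSpace ℝ (Fin n)) {t : ℝ} (ht : 0 < t) (r : ℝ) :
    volume (ball c (t * r)) = ENNReal.ofReal (t ^ n) * volume (ball c' r) := by
  rw [Measure.addHaar_ball_mul_of_pos _ _ ht, Measure.addHaar_ball_center volume c' r]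
  simp

lemma large_ball {n : ℕ} (g : EuclideanSpace ℝ (Fin n) → ℝ)
    {c x c' z : EuclideanSpace ℝ (Fin n)} {r ρ : ℝ} (hx : x ∈ ball c r) (hρ : r ≤ ρ)
    (hz : z ∈ ball c' ρ) (hz' : z ∈ ball c r) :
    (volume (ball c' ρ))⁻¹ * ∫⁻ y in ball c' ρ, ‖g y‖₊
      ≤ ENNReal.ofReal (3 ^ n) * maximalFn volume g x := by
  have hρ0 : 0 < ρ := pos_of_mem_ball hz
  have hx3 : x ∈ ball c' (3 * ρ) := by
    simp only [mem_ball] at *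
    have h1 := dist_triangle x c c'
    have h2 := dist_triangle c z c'
    rw [dist_comm c z] at h2
    linarith
  rw [mul_comm, ← div_eq_mul_inv, ENNReal.div_le_iff' (measure_ball_pos _ _ hρ0).ne'
    measure_ball_lt_top.ne]
  calc ∫⁻ y in ball c' ρ, ‖g y‖₊ ≤ ∫⁻ y in ball c' (3 * ρ), ‖g y‖₊ :=
        lintegral_mono_set (ball_subset_ball (by linarith))
    _ ≤ volume (ball c' (3 * ρ)) * maximalFn volume g x := setLIntegral_le_maximalFn g hx3
    _ = _ := by rw [vol_ball_scale c' c' (by norm_num)]; ring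

lemma weak_type {n : ℕ} (g : EuclideanSpace ℝ (Fin n) → ℝ)
    (c : EuclideanSpace ℝ (Fin n)) (r : ℝ) (l : ℝ≥0∞)
    (H : ∀ c' z ρ, r ≤ ρ → z ∈ ball c' ρ → z ∈ ball c r →
      (volume (ball c' ρ))⁻¹ * ∫⁻ y in ball c' ρ, ‖g y‖₊ ≤ l) :
    l * volume (ball c r ∩ {x | l < maximalFn volume g x})
      ≤ ENNReal.ofReal (5 ^ n) * ∫⁻ y in ball c (3 * r), ‖g y‖₊ := by
  let t : Set (EuclideanSpace ℝ (Fin n) × ℝ) := {p | p.2 < r ∧ 0 < p.2 ∧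
    (∃ z, z ∈ ball p.1 p.2 ∧ z ∈ ball c r) ∧
    l < (volume (ball p.1 p.2))⁻¹ * ∫⁻ y in ball p.1 p.2, ‖g y‖₊}
  obtain ⟨u, hut, hdis, hcov⟩ := Vitali.exists_disjoint_subfamily_covering_enlargement_ball t
    (fun p => p.1) (fun p => p.2) r (fun p hp => hp.1.le) 5 (by norm_num)
  have hcount : u.Countable := hdis.countable_of_isOpen (fun _ _ => isOpen_ball)
    (fun p hp => nonempty_ball.2 (hut hp).2.1)
  have hsub : ball c r ∩ {x | l < maximalFn volume g x} ⊆ ⋃ p ∈ u, ball p.1 (5 * p.2) := by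
    rintro x ⟨hx, hx2⟩
    simp only [mem_ofPred_eq, maximalFn, lt_iSup_iff] at hx2
    obtain ⟨c', ρ, hxc, h⟩ := hx2
    have hρr : ρ < r := by
      by_contra hcon
      exact absurd h (not_lt.2 (H c' x ρ (not_lt.1 hcon) hxc hx))
    obtain ⟨b, hb, hb2⟩ := hcov (c', ρ) ⟨hρr, pos_of_mem_ball hxc, ⟨x, hxc, hx⟩, h⟩
    exact mem_biUnion hb (hb2 hxc)
  have hin : (⋃ p ∈ u, ball p.1 p.2) ⊆ ball c (3 * r) := by
    apply iUnion₂_subset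
    intro p hp y hy
    obtain ⟨h1, h2, ⟨z, hz, hz'⟩, h3⟩ := hut hp
    simp only [mem_ball] at *
    have h1 := dist_triangle y p.1 c
    have h2 := dist_triangle p.1 z c
    rw [dist_comm p.1 z] at h2
    linarith
  calc l * volume (ball c r ∩ {x | l < maximalFn volume g x})
      ≤ l * ∑' p : u, volume (ball p.1.1 (5 * p.1.2)) := by
        gcongr
        exact (measure_mono hsub).trans (measure_biUnion_le _ hcount _)
    _ = ENNReal.ofReal (5 ^ n) * ∑' p : u, l * volume (ball p.1.1 p.1.2) := by
        rw [ENNReal.tsum_mul_left]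
        simp_rw [fun p : u => vol_ball_scale p.1.1 p.1.1 (t := 5) (by norm_num) p.1.2]
        rw [ENNReal.tsum_mul_left]
        ring
    _ ≤ ENNReal.ofReal (5 ^ n) * ∑' p : u, ∫⁻ y in ball p.1.1 p.1.2, ‖g y‖₊ := by
        gcongr with p
        obtain ⟨h1, h2, h3, h4⟩ := hut p.2
        rw [mul_comm _ (lintegral _ _), ← div_eq_mul_inv] at h4
        exact (ENNReal.le_div_iff_mul_le (Or.inl (measure_ball_pos _ _ h2).ne')
          (Or.inl measure_ball_lt_top.ne)).1 h4.le
    _ = ENNReal.ofReal (5 ^ n) * ∫⁻ y in ⋃ p ∈ u, ball p.1 p.2, ‖g y‖₊ := by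
        rw [lintegral_biUnion hcount (fun _ _ => measurableSet_ball) hdis]
    _ ≤ _ := by
        gcongr

lemma layer_bound {α : Type*} [MeasurableSpace α] (ν : Measure α) (f : α → ℝ)
    (hf : Measurable f) (hf0 : ∀ x, 0 ≤ f x) (b d : ℝ) (hb : 0 < b) (hd0 : 0 < d) (hd1 : d < 1)
    (H : ∀ t, 0 < t → ν {x | t < f x} ≤ ENNReal.ofReal (b / t) * ν univ) :
    ∫⁻ x, ENNReal.ofReal (f x ^ d) ∂ν ≤ ν univ * ENNReal.ofReal (b ^ d / (1 - d)) := by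
  rw [lintegral_rpow_eq_lintegral_meas_lt_mul ν (Filter.Eventually.of_forall hf0)
    hf.aemeasurable hd0]
  rw [← Ioc_union_Ioi_eq_Ioi hb.le, lintegral_union measurableSet_Ioi
    (Set.disjoint_left.2 fun x hx hx' => not_lt.2 hx.2 hx')]
  have i1 : ∫⁻ t in Ioc 0 b, ν {x | t < f x} * ENNReal.ofReal (t ^ (d - 1))
      ≤ ν univ * ENNReal.ofReal (b ^ d / d) := by
    calc _ ≤ ∫⁻ t in Ioc 0 b, ν univ * ENNReal.ofReal (t ^ (d - 1)) := by
          gcongr; exact subset_univ _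
      _ = ν univ * ∫⁻ t in Ioc 0 b, ENNReal.ofReal (t ^ (d - 1)) :=
          lintegral_const_mul _ (by fun_prop)
      _ = _ := by
          congr 1
          rw [← ofReal_integral_eq_lintegral_ofReal]
          · rw [← intervalIntegral.integral_of_le hb.le, integral_rpow (Or.inl (by linarith))]
            simp [Real.zero_rpow hd0.ne']
          · exact (intervalIntegrable_iff_integrableOn_Ioc_of_le hb.le).1
              (intervalIntegral.intervalIntegrable_rpow' (by linarith))
          · filter_upwards [ae_restrict_mem measurableSet_Ioc] with t ht
            exact Real.rpow_nonneg ht.1.le _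
  have i2 : ∫⁻ t in Ioi b, ν {x | t < f x} * ENNReal.ofReal (t ^ (d - 1))
      ≤ ν univ * ENNReal.ofReal (b ^ d / (1 - d)) := by
    calc _ ≤ ∫⁻ t in Ioi b, (ν univ * ENNReal.ofReal b) * ENNReal.ofReal (t ^ (d - 2)) := by
          apply setLIntegral_mono (by fun_prop)
          intro t ht
          have ht0 : 0 < t := hb.trans ht
          calc _ ≤ (ENNReal.ofReal (b / t) * ν univ) * ENNReal.ofReal (t ^ (d - 1)) := by
                gcongr; exact H t ht0
            _ = ν univ * (ENNReal.ofReal (b / t) * ENNReal.ofReal (t ^ (d - 1))) := by ring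
            _ = ν univ * (ENNReal.ofReal b * ENNReal.ofReal (t ^ (d - 2))) := by
                rw [← ENNReal.ofReal_mul (by positivity), ← ENNReal.ofReal_mul hb.le]
                congr 2
                rw [show d - 1 = (d - 2) + 1 by ring, Real.rpow_add_one ht0.ne']
                field_simp
            _ = _ := by ring
            _ ≤ _ := le_rfl
      _ = (ν univ * ENNReal.ofReal b) * ∫⁻ t in Ioi b, ENNReal.ofReal (t ^ (d - 2)) :=
          lintegral_const_mul _ (by fun_prop)
      _ = _ := by
          rw [← ofReal_integral_eq_lintegral_ofReal]
          · rw [integral_Ioi_rpow_of_lt (by linarith) hb, mul_assoc, ← ENNReal.ofReal_mul hb.le]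
            congr 2
            have : b ^ d = b ^ (d - 2 + 1) * b := by
              rw [← Real.rpow_add_one hb.ne']; congr 1; ring
            rw [this]
            have h1 : (1 - d) ≠ 0 := by linarith
            have h2 : d - 2 + 1 = -(1 - d) := by ring
            rw [h2]
            field_simp
          · exact integrableOn_Ioi_rpow_of_lt (by linarith) hb
          · filter_upwards [ae_restrict_mem measurableSet_Ioi] with t ht
            exact Real.rpow_nonneg (hb.trans ht).le _
  calc _ ≤ ENNReal.ofReal d * (ν univ * ENNReal.ofReal (b ^ d / d) +
        ν univ * ENNReal.ofReal (b ^ d / (1 - d))) := by gcongr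
    _ = ν univ * (ENNReal.ofReal d * (ENNReal.ofReal (b ^ d / d) +
        ENNReal.ofReal (b ^ d / (1 - d)))) := by ring
    _ = _ := by
      have h1 : 0 < 1 - d := by linarith
      rw [← ENNReal.ofReal_add (by positivity) (by positivity), ← ENNReal.ofReal_mul hd0.le]
      congr 2
      field_simp
      ring

/-- distributional bound relative to a point `x` of the ball -/
lemma dist_bound {n : ℕ} (g : EuclideanSpace ℝ (Fin n) → ℝ)
    {c x : EuclideanSpace ℝ (Fin n)} {r a : ℝ} (hx : x ∈ ball c r) (ha : 0 < a)
    (hM : maximalFn volume g x = ENNReal.ofReal a) (t : ℝ) (ht : 0 < t) :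
    volume (ball c r ∩ {y | t < (maximalFn volume g y).toReal})
      ≤ ENNReal.ofReal (15 ^ n * a / t) * volume (ball c r) := by
  have hr : 0 < r := pos_of_mem_ball hx
  rcases lt_or_ge t (3 ^ n * a) with h | h
  · have h1 : (1 : ℝ≥0∞) ≤ ENNReal.ofReal (15 ^ n * a / t) := by
      rw [ENNReal.one_le_ofReal, one_le_div ht]
      refine h.le.trans ?_
      gcongr
      norm_num
    calc _ ≤ 1 * volume (ball c r) := by rw [one_mul]; exact measure_mono inter_subset_left
      _ ≤ _ := by gcongr
  · have hw := weak_type g c r (ENNReal.ofReal t) (by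
      intro c' z ρ h1 h2 h3
      refine (large_ball g hx h1 h2 h3).trans ?_
      rw [hM, ← ENNReal.ofReal_mul (by positivity)]
      exact ENNReal.ofReal_le_ofReal h)
    have h3 : ∫⁻ y in ball c (3 * r), ‖g y‖₊ ≤
        ENNReal.ofReal (3 ^ n) * volume (ball c r) * ENNReal.ofReal a := by
      rw [← hM, ← vol_ball_scale c c (by norm_num : (0 : ℝ) < 3)]
      exact setLIntegral_le_maximalFn g (ball_subset_ball (by linarith) hx)
    have hsub : ball c r ∩ {y | t < (maximalFn volume g y).toReal} ⊆
        ball c r ∩ {y | ENNReal.ofReal t < maximalFn volume g y} := by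
      rintro y ⟨hy, hy2⟩
      exact ⟨hy, (ENNReal.ofReal_lt_ofReal_iff_of_nonneg ht.le).2 hy2 |>.trans_le
        ENNReal.ofReal_toReal_le⟩
    refine (measure_mono hsub).trans ?_
    have h4 : ENNReal.ofReal t * volume (ball c r ∩ {y | ENNReal.ofReal t < maximalFn volume g y})
        ≤ ENNReal.ofReal t * (ENNReal.ofReal (15 ^ n * a / t) * volume (ball c r)) := by
      refine hw.trans ?_
      calc _ ≤ ENNReal.ofReal (5 ^ n) *
            (ENNReal.ofReal (3 ^ n) * volume (ball c r) * ENNReal.ofReal a) := by gcongr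
        _ = (ENNReal.ofReal (5 ^ n) * ENNReal.ofReal (3 ^ n) * ENNReal.ofReal a) *
            volume (ball c r) := by ring
        _ = _ := by
          rw [← mul_assoc, ← ENNReal.ofReal_mul (by positivity),
            ← ENNReal.ofReal_mul (by positivity), ← ENNReal.ofReal_mul (by positivity)]
          congr 2
          rw [← mul_pow]
          field_simp
          norm_num
    exact (ENNReal.mul_le_mul_iff_right (ENNReal.ofReal_pos.2 ht).ne' ENNReal.ofReal_ne_top).1 h4

lemma maximalFn_finite {n : ℕ} (g : EuclideanSpace ℝ (Fin n) → ℝ)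
    (hg : Integrable g volume) (c : EuclideanSpace ℝ (Fin n)) (r : ℝ) (hr : 0 < r) :
    volume (ball c r ∩ {x | maximalFn volume g x = ⊤}) = 0 := by
  have hfin : ∫⁻ y, ‖g y‖₊ < ⊤ := hg.2
  set N := ∫⁻ y, (‖g y‖₊ : ℝ≥0∞) with hN
  set m := volume (ball c r ∩ {x | maximalFn volume g x = ⊤}) with hm
  set L := (volume (ball c r))⁻¹ * N with hL
  have hLtop : L ≠ ⊤ := ENNReal.mul_ne_top
    (ENNReal.inv_ne_top.2 (measure_ball_pos _ _ hr).ne') hfin.ne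
  have key : ∀ l : ℝ≥0∞, L ≤ l → l ≠ ⊤ → l * m ≤ ENNReal.ofReal (5 ^ n) * N := by
    intro l hl hlt
    have hw := weak_type g c r l (by
      intro c' z ρ h1 h2 h3
      refine le_trans ?_ hl
      have hv : volume (ball c r) ≤ volume (ball c' ρ) := by
        rw [Measure.addHaar_ball_center volume c, Measure.addHaar_ball_center volume c']
        exact measure_mono (ball_subset_ball h1)
      rw [hL]
      gcongr
      exact setLIntegral_le_lintegral _ _)
    calc l * m ≤ l * volume (ball c r ∩ {x | l < maximalFn volume g x}) := by
          gcongr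
          refine measure_mono (inter_subset_inter_right _ ?_)
          intro x hx
          have hx' : maximalFn volume g x = ⊤ := hx
          change l < maximalFn volume g x
          rw [hx']; exact hlt.lt_top
      _ ≤ _ := hw
      _ ≤ _ := by gcongr; exact setLIntegral_le_lintegral _ _
  by_contra hm0
  have hD : ENNReal.ofReal (5 ^ n) * N / m ≠ ⊤ :=
    ENNReal.div_ne_top (ENNReal.mul_ne_top ENNReal.ofReal_ne_top hfin.ne) hm0
  have hmt : m ≠ ⊤ := ((measure_mono inter_subset_left).trans_lt measure_ball_lt_top).ne
  have h := key (L + ENNReal.ofReal (5 ^ n) * N / m + 1)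
    (by rw [add_assoc]; exact le_self_add) (ENNReal.add_ne_top.2 ⟨ENNReal.add_ne_top.2 ⟨hLtop, hD⟩, ENNReal.one_ne_top⟩)
  rw [← ENNReal.le_div_iff_mul_le (Or.inl hm0) (Or.inl hmt)] at h
  have h2 : ENNReal.ofReal (5 ^ n) * N / m < L + ENNReal.ofReal (5 ^ n) * N / m + 1 := by
    rw [add_comm L, add_assoc]
    exact ENNReal.lt_add_right hD (by simp)
  exact absurd h (not_le.2 h2)

lemma maximalFn_pos {n : ℕ} (g : EuclideanSpace ℝ (Fin n) → ℝ)
    (hg : Integrable g volume) (hgne : ¬ (g =ᵐ[volume] 0)) (x : EuclideanSpace ℝ (Fin n)) :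
    maximalFn volume g x ≠ 0 := by
  intro h0
  apply hgne
  have h1 : ∀ k : ℕ, ∀ᵐ y ∂volume.restrict (ball x (k + 1)), g y = 0 := by
    intro k
    have := setLIntegral_le_maximalFn g (mem_ball_self (x := x) (ε := (k : ℝ) + 1) (by positivity))
    rw [h0, mul_zero, nonpos_iff_eq_zero, lintegral_eq_zero_iff'
      (by exact hg.1.restrict.enorm)] at this
    filter_upwards [this] with y hy
    simpa using hy
  have h2 : (⋃ k : ℕ, ball x ((k : ℝ) + 1)) = univ := by
    rw [eq_univ_iff_forall]
    intro y
    obtain ⟨k, hk⟩ := exists_nat_gt (dist y x)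
    exact mem_iUnion.2 ⟨k, by rw [mem_ball]; linarith⟩
  have h3 := (ae_restrict_iUnion_iff (μ := volume) (fun k : ℕ => ball x ((k : ℝ) + 1))
    (fun y => g y = 0)).2 h1
  rw [h2, Measure.restrict_univ] at h3
  exact h3

lemma power_bound {n : ℕ} (g : EuclideanSpace ℝ (Fin n) → ℝ)
    {c x : EuclideanSpace ℝ (Fin n)} {r a d : ℝ} (hx : x ∈ ball c r) (ha : 0 < a)
    (hM : maximalFn volume g x = ENNReal.ofReal a) (hd0 : 0 < d) (hd1 : d < 1) :
    IntegrableOn (fun y => (maximalFn volume g y).toReal ^ d) (ball c r) ∧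
    ⨍ y in ball c r, (maximalFn volume g y).toReal ^ d ≤ (15 ^ n * a) ^ d / (1 - d) := by
  have hr : 0 < r := pos_of_mem_ball hx
  have hmeas : Measurable fun y => (maximalFn volume g y).toReal :=
    (maximalFn_measurable g).ennreal_toReal
  have hV0 := (measure_ball_pos volume c hr).ne'
  have hVt : volume (ball c r) ≠ ⊤ := measure_ball_lt_top.ne
  have h1d : 0 < 1 - d := by linarith
  have hb := layer_bound (volume.restrict (ball c r)) _ hmeas (fun _ => ENNReal.toReal_nonneg)
    (15 ^ n * a) d (by positivity) hd0 hd1 (by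
      intro t ht
      rw [Measure.restrict_apply (measurableSet_lt measurable_const hmeas), inter_comm,
        Measure.restrict_apply_univ]
      exact dist_bound g hx ha hM t ht)
  rw [Measure.restrict_apply_univ] at hb
  have hnn : ∀ y, 0 ≤ (maximalFn volume g y).toReal ^ d := fun y =>
    Real.rpow_nonneg ENNReal.toReal_nonneg _
  have hm2 : Measurable fun y => (maximalFn volume g y).toReal ^ d := hmeas.pow_const d
  refine ⟨⟨hm2.aestronglyMeasurable, ?_⟩, ?_⟩
  · rw [hasFiniteIntegral_iff_ofReal (Filter.Eventually.of_forall hnn)]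
    exact hb.trans_lt (ENNReal.mul_lt_top hVt.lt_top ENNReal.ofReal_lt_top)
  · rw [setAverage_eq, integral_eq_lintegral_of_nonneg_ae (Filter.Eventually.of_forall hnn)
      hm2.aestronglyMeasurable, smul_eq_mul, measureReal_def, inv_mul_le_iff₀ (ENNReal.toReal_pos hV0 hVt)]
    have := ENNReal.toReal_mono (ENNReal.mul_ne_top hVt ENNReal.ofReal_ne_top) hb
    rwa [ENNReal.toReal_mul, ENNReal.toReal_ofReal (by positivity)] at this

end Helpers

/-- Let `g ∈ L¹(ℝⁿ)`, `g` not a.e. zero, and `1 < s < ∞`.  Then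
`W(x) = (Mg(x))^{1/s}` belongs to `RH_q` for every `1 < q < s`. -/
theorem maximal_power_rh_q {n : ℕ} (g : EuclideanSpace ℝ (Fin n) → ℝ)
    (hg : Integrable g volume) (hgne : ¬ (g =ᵐ[volume] 0))
    (s : ℝ) (hs : 1 < s) :
    ∀ q : ℝ, 1 < q → q < s →
      ∃ C : ℝ, 0 < C ∧ ∀ (c : EuclideanSpace ℝ (Fin n)) (r : ℝ), 0 < r →
        (⨍ x in ball c r, ((maximalFn volume g x).toReal ^ (1/s)) ^ q) ^ (1/q) ≤
          C * ⨍ x in ball c r, (maximalFn volume g x).toReal ^ (1/s) := by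
  intro q hq1 hqs
  have hs0 : 0 < s := by linarith
  have hq0 : 0 < q := by linarith
  have hd0 : 0 < q / s := by positivity
  have hd1 : q / s < 1 := (div_lt_one hs0).2 hqs
  have h1d : 0 < 1 - q / s := by linarith
  refine ⟨(((15 : ℝ) ^ n) ^ (q / s) / (1 - q / s)) ^ (1 / q), by positivity, ?_⟩
  intro c r hr
  set K := (((15 : ℝ) ^ n) ^ (q / s) / (1 - q / s)) ^ (1 / q) with hK
  have hV0 := (measure_ball_pos volume c hr).ne'
  have hVt : volume (ball c r) ≠ ⊤ := measure_ball_lt_top.ne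
  have hpow : ∀ x, ((maximalFn volume g x).toReal ^ (1 / s)) ^ q =
      (maximalFn volume g x).toReal ^ (q / s) := by
    intro x
    rw [← Real.rpow_mul ENNReal.toReal_nonneg]
    congr 1
    ring
  simp_rw [hpow]
  -- points of finiteness
  have hfin : ∀ᵐ x ∂volume.restrict (ball c r), x ∈ ball c r ∧ maximalFn volume g x ≠ ⊤ := by
    have h1 : ∀ᵐ x ∂volume.restrict (ball c r), maximalFn volume g x ≠ ⊤ := by
      rw [ae_iff, Measure.restrict_apply' measurableSet_ball, Set.inter_comm]
      simpa using maximalFn_finite g hg c r hr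
    filter_upwards [h1, ae_restrict_mem measurableSet_ball] with x h2 h3 using ⟨h3, h2⟩
  have hpt : ∀ x, x ∈ ball c r ∧ maximalFn volume g x ≠ ⊤ →
      0 < (maximalFn volume g x).toReal ∧
      maximalFn volume g x = ENNReal.ofReal (maximalFn volume g x).toReal := fun x hx =>
    ⟨ENNReal.toReal_pos (maximalFn_pos g hg hgne x) hx.2, (ENNReal.ofReal_toReal hx.2).symm⟩
  have hbound : ∀ᵐ x ∂volume.restrict (ball c r),
      (⨍ x in ball c r, (maximalFn volume g x).toReal ^ (q / s)) ^ (1 / q) ≤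
        K * (maximalFn volume g x).toReal ^ (1 / s) := by
    filter_upwards [hfin] with x hx
    obtain ⟨ha, hM⟩ := hpt x hx
    have h := (power_bound g hx.1 ha hM hd0 hd1).2
    set a := (maximalFn volume g x).toReal
    have hnn : 0 ≤ ⨍ x in ball c r, (maximalFn volume g x).toReal ^ (q / s) := by
      rw [setAverage_eq]
      exact smul_nonneg (by positivity) (integral_nonneg fun y =>
        Real.rpow_nonneg ENNReal.toReal_nonneg _)
    calc _ ≤ ((15 ^ n * a) ^ (q / s) / (1 - q / s)) ^ (1 / q) :=
          Real.rpow_le_rpow hnn h (by positivity)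
      _ = ((((15 : ℝ) ^ n) ^ (q / s) / (1 - q / s)) * a ^ (q / s)) ^ (1 / q) := by
          rw [Real.mul_rpow (by positivity) ha.le]
          congr 1
          ring
      _ = K * a ^ (1 / s) := by
          rw [Real.mul_rpow (by positivity) (by positivity), ← Real.rpow_mul ha.le]
          congr 2
          field_simp
  have hne : (volume.restrict (ball c r)) ≠ 0 := by
    simpa [Measure.restrict_eq_zero] using hV0
  have hint : IntegrableOn (fun y => (maximalFn volume g y).toReal ^ (1 / s)) (ball c r) := by
    haveI : (ae (volume.restrict (ball c r))).NeBot := ae_neBot.2 hne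
    obtain ⟨x, hx⟩ := hfin.exists
    obtain ⟨ha, hM⟩ := hpt x hx
    exact (power_bound g hx.1 ha hM (by positivity) ((div_lt_one hs0).2 hs)).1
  set I := (⨍ x in ball c r, (maximalFn volume g x).toReal ^ (q / s)) ^ (1 / q) with hI
  have hVpos : 0 < volume.real (ball c r) := ENNReal.toReal_pos hV0 hVt
  have h := integral_mono_ae (μ := volume.restrict (ball c r)) (f := fun _ => I)
    (integrableOn_const hVt) (hint.const_mul K) hbound
  rw [integral_const_mul] at h
  simp only [integral_const, smul_eq_mul, measureReal_restrict_apply_univ] at h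
  rw [setAverage_eq, smul_eq_mul, ← mul_assoc, mul_comm K, mul_assoc,
    le_inv_mul_iff₀ hVpos]
  exact h
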